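/- For every ρ > 0, there exists a nonnegative supermartingale (N_n)_{n≥0} with respect to (F_n)_{n≥0} with N_0 = 1 such that for every n ≥ 0, almost surely (1/2)·exp( ρ·‖ξ̂_n − (Σ_{m=1}^n λ_m)·μ‖ − (ρ²·β²·𝔠_p(ρ) + ρ·K_p·2^{p−1})·G_n ) ≤ N_n. -/

import Mathlib

open MeasureTheory
open scoped Classical

/-- `truncB x = min(1, ‖x‖)/‖x‖` for `x ≠ 0`, and `truncB 0 = 1`; so `truncB x • x` is the
projection of `x` onto the closed unit ball. -/
noncomputable def truncB {B : Type*} [NormedAddCommGroup B] (x : B) : ℝ :=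
  if x = 0 then 1 else min 1 ‖x‖ / ‖x‖

/-- `K_p = (1/p) ((p-1)/p)^{p-1}`. -/
noncomputable def Kp (p : ℝ) : ℝ := (1 / p) * ((p - 1) / p) ^ (p - 1)

/-- `𝔠_p(ρ) = 2^{p+1} (e^{2ρ} - 2ρ - 1)/(2ρ)²`. -/
noncomputable def frakC (p ρ : ℝ) : ℝ :=
  2 ^ (p + 1) * (Real.exp (2 * ρ) - 2 * ρ - 1) / (2 * ρ) ^ 2

/-!
Subtracting `(∑ λ) • μ` from `ξ` leaves a random walk with increments `clip (λ • (X - Z))`, minus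
the predictable sum of the `λ • (μ - Z)`. Clipping a vector `w` moves it by at most `K_p ‖w‖ ^ p`,
so the compensator of the walk is within `K_p 2 ^ (p - 1) G` of that sum, and it remains to control
`ρ ‖M‖` for the martingale part `M` of the walk. The increments of `M` have norm at most `2`, and
their conditional variances add up to at most `2 ^ (p + 1) G`.

Let `J` be the duality map, a continuous selection of subgradients of `‖x‖ ^ 2 / 2`. Smoothness
bounds `‖x + y‖ ^ 2` by `‖x‖ ^ 2 + 2 J x y + β ^ 2 ‖y‖ ^ 2`, and convexity of `cosh` in the square
of its argument turns this into
`cosh ‖x + y‖ ≤ cosh ‖x‖ + L x y + β ^ 2 cosh ‖x‖ (exp ‖y‖ - 1 - ‖y‖)` with `L x` a multiple of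
`J x`. The linear term has conditional mean zero, so in conditional mean a step multiplies
`cosh (ρ ‖M‖)` by at most one plus a multiple of the conditional variance, and compensating by an
exponential gives a supermartingale. Finally `exp t / 2 ≤ cosh t`.
-/

section

open Real Filter Topology

section TwoSmooth

/-- The norm of `B` is `(2, β)`-smooth: its square satisfies the parallelogram law up to the
constant `β²`. -/
def IsTwoSmooth (B : Type*) [NormedAddCommGroup B] (β : ℝ) : Prop :=
  ∀ x y : B, ‖x + y‖ ^ 2 + ‖x - y‖ ^ 2 ≤ 2 * ‖x‖ ^ 2 + 2 * β ^ 2 * ‖y‖ ^ 2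

lemma le_add_apply_add_mul_norm_sq {E : Type*} [SeminormedAddCommGroup E] [NormedSpace ℝ E]
    {f : E → ℝ} {K : ℝ} (hf : ∀ x y, f (x + y) + f (x - y) ≤ 2 * f x + 2 * K * ‖y‖ ^ 2)
    {x : E} {l : E →ₗ[ℝ] ℝ} (hl : ∀ y, f x + l y ≤ f (x + y)) (y : E) :
    f (x + y) ≤ f x + l y + K * ‖y‖ ^ 2 := by
  -- Each use of `hf` at `x + y / 2` halves the excess over the constant `K`.
  have hdyadic : ∀ n : ℕ, ∀ y, f (x + y) ≤ f x + l y + K * (1 + (1 / 2) ^ n) * ‖y‖ ^ 2 := by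
    intro n
    induction n with
    | zero =>
      intro y
      have hneg := hl (-y)
      rw [map_neg, ← sub_eq_add_neg x y] at hneg
      linarith [hf x y]
    | succ n ih =>
      intro y
      have hmid := hf (x + (1 / 2 : ℝ) • y) ((1 / 2 : ℝ) • y)
      have hhalf := ih ((1 / 2 : ℝ) • y)
      have hnorm : ‖(1 / 2 : ℝ) • y‖ = 1 / 2 * ‖y‖ := by rw [norm_smul]; norm_num
      rw [show x + (1 / 2 : ℝ) • y + (1 / 2 : ℝ) • y = x + y by module,
        add_sub_cancel_right, hnorm] at hmid
      rw [hnorm, map_smul, smul_eq_mul] at hhalf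
      rw [pow_succ]
      linarith
  have hlim : Tendsto (fun n : ℕ => f x + l y + K * (1 + (1 / 2 : ℝ) ^ n) * ‖y‖ ^ 2) atTop
      (𝓝 (f x + l y + K * (1 + 0) * ‖y‖ ^ 2)) :=
    ((((tendsto_pow_atTop_nhds_zero_of_lt_one (by norm_num) (by norm_num)).const_add 1).const_mul
      K).mul_const _).const_add _
  simpa using ge_of_tendsto' hlim fun n => hdyadic n y

lemma lipschitzWith_of_le_of_le_add_mul_norm_sq {E : Type*} [SeminormedAddCommGroup E]
    [NormedSpace ℝ E] {f : E → ℝ} {L : E → StrongDual ℝ E} {K : NNReal}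
    (hlower : ∀ x y, f x + L x y ≤ f (x + y))
    (hupper : ∀ x y, f (x + y) ≤ f x + L x y + K * ‖y‖ ^ 2) :
    LipschitzWith (2 * K) L := by
  have hdiff (x x' h : E) : (L x - L x') h ≤ K * (‖h‖ ^ 2 + ‖x' - x‖ ^ 2) := by
    have hlow := hlower x (x' - x + h)
    have hup := hupper x (x' - x)
    rw [show x + (x' - x + h) = x' + h by abel, map_add] at hlow
    rw [add_sub_cancel] at hup
    simp only [FunLike.coe_sub, Pi.sub_apply]
    linarith [hupper x' h]
  refine LipschitzWith.of_dist_le_mul fun x x' => ?_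
  rw [dist_eq_norm, dist_eq_norm, NNReal.coe_mul, NNReal.coe_ofNat]
  refine ContinuousLinearMap.opNorm_le_bound _ (by positivity) fun h => ?_
  -- `hdiff` at `t • h` is a quadratic in `t`, so its discriminant is nonpositive.
  have hdiscrim : discrim (K * ‖h‖ ^ 2) (-(L x - L x') h) (K * ‖x - x'‖ ^ 2) ≤ 0 := by
    refine discrim_le_zero fun t => ?_
    have ht := hdiff x x' (t • h)
    rw [map_smul, smul_eq_mul, norm_smul, mul_pow, Real.norm_eq_abs, sq_abs,
      norm_sub_rev x' x] at ht
    linarith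
  rw [discrim] at hdiscrim
  rw [Real.norm_eq_abs]
  exact abs_le_of_sq_le_sq (by linarith) (by positivity)

lemma exists_dual_half_norm_sq_add_le {E : Type*} [NormedAddCommGroup E] [NormedSpace ℝ E]
    (x : E) :
    ∃ l : StrongDual ℝ E, ‖l‖ ≤ ‖x‖ ∧ ∀ y, ‖x‖ ^ 2 / 2 + l y ≤ ‖x + y‖ ^ 2 / 2 := by
  obtain ⟨φ, hφ_norm, hφ_apply⟩ := exists_dual_vector'' ℝ x
  rw [RCLike.ofReal_real_eq_id, id_eq] at hφ_apply
  refine ⟨‖x‖ • φ, ?_, fun y => ?_⟩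
  · rw [norm_smul, norm_norm]
    exact mul_le_of_le_one_right (norm_nonneg x) hφ_norm
  · have hφ_le : ‖x‖ + φ y ≤ ‖x + y‖ := by
      rw [← hφ_apply, ← map_add]
      simpa using (le_abs_self _).trans (φ.le_of_opNorm_le hφ_norm (x + y))
    rw [FunLike.coe_smul, Pi.smul_apply, smul_eq_mul]
    nlinarith [sq_nonneg (‖x + y‖ - ‖x‖), norm_nonneg x]

variable {B : Type*} [NormedAddCommGroup B] {β : ℝ}

lemma IsTwoSmooth.one_le_sq (hB : IsTwoSmooth B β) {y : B} (hy : y ≠ 0) : 1 ≤ β ^ 2 := by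
  have h := hB 0 y
  rw [zero_add, zero_sub, norm_neg, norm_zero] at h
  have hpos : 0 < ‖y‖ ^ 2 := by positivity
  nlinarith

variable [NormedSpace ℝ B]

theorem IsTwoSmooth.exists_continuous_dual (hB : IsTwoSmooth B β) :
    ∃ J : B → StrongDual ℝ B, Continuous J ∧ (∀ x, ‖J x‖ ≤ ‖x‖) ∧
      ∀ x y, ‖x + y‖ ^ 2 ≤ ‖x‖ ^ 2 + 2 * J x y + β ^ 2 * ‖y‖ ^ 2 := by
  choose J hJ_norm hJ_lower using exists_dual_half_norm_sq_add_le (E := B)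
  have hJ_upper (x y : B) :
      ‖x + y‖ ^ 2 / 2 ≤ ‖x‖ ^ 2 / 2 + J x y + β ^ 2 / 2 * ‖y‖ ^ 2 :=
    le_add_apply_add_mul_norm_sq (f := fun x : B => ‖x‖ ^ 2 / 2) (l := (J x).toLinearMap)
      (fun x y => by linarith [hB x y]) (hJ_lower x) y
  have hJ_lip : LipschitzWith (2 * (β ^ 2 / 2).toNNReal) J := by
    refine lipschitzWith_of_le_of_le_add_mul_norm_sq (f := fun x => ‖x‖ ^ 2 / 2) hJ_lower ?_
    rwa [Real.coe_toNNReal _ (by positivity)]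
  exact ⟨J, hJ_lip.continuous, hJ_norm, fun x y => by linarith [hJ_upper x y]⟩

end TwoSmooth

section CoshEstimates

lemma cosh_le_cosh_mul_cosh_add {a c u : ℝ} (ha : 0 < a) (hc : 0 < c)
    (hlower : (a - c) ^ 2 ≤ u ^ 2) (hupper : u ^ 2 ≤ (a + c) ^ 2) :
    cosh u ≤ cosh a * cosh c + (u ^ 2 - a ^ 2 - c ^ 2) / (2 * a * c) * (sinh a * sinh c) := by
  -- `cosh` is a power series in `u ^ 2` with nonnegative coefficients, hence convex in `u ^ 2`,
  -- and the right-hand side is its chord between `(a - c) ^ 2` and `(a + c) ^ 2`.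
  set θ := (u ^ 2 - (a - c) ^ 2) / (4 * a * c) with hθ
  have hac : 0 < 4 * a * c := by positivity
  have hθ_nonneg : 0 ≤ θ := div_nonneg (by linarith) hac.le
  have hθ_le_one : θ ≤ 1 := by rw [hθ, div_le_one hac]; linarith
  have hu : u ^ 2 = (1 - θ) * (a - c) ^ 2 + θ * (a + c) ^ 2 := by rw [hθ]; field
  have hchord : cosh u ≤ (1 - θ) * cosh (a - c) + θ * cosh (a + c) := by
    refine hasSum_le (fun n => ?_) (hasSum_cosh u)
      (((hasSum_cosh (a - c)).mul_left (1 - θ)).add ((hasSum_cosh (a + c)).mul_left θ))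
    have hpow : u ^ (2 * n) ≤ (1 - θ) * (a - c) ^ (2 * n) + θ * (a + c) ^ (2 * n) := by
      simpa only [smul_eq_mul, ← hu, ← pow_mul] using
        (convexOn_pow (𝕜 := ℝ) n).2 (Set.mem_Ici.2 (sq_nonneg (a - c)))
          (Set.mem_Ici.2 (sq_nonneg (a + c))) (sub_nonneg.2 hθ_le_one) hθ_nonneg
          (sub_add_cancel 1 θ)
    rw [mul_div_assoc', mul_div_assoc', ← add_div]
    gcongr
  have hslope : (u ^ 2 - a ^ 2 - c ^ 2) / (2 * a * c) = 2 * θ - 1 := by rw [hθ]; field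
  rw [cosh_add, cosh_sub] at hchord
  rw [hslope]
  linarith

lemma sinh_le_mul_cosh {a : ℝ} (ha : 0 ≤ a) : sinh a ≤ a * cosh a := by
  refine hasSum_le (fun n => ?_) (hasSum_sinh a) ((hasSum_cosh a).mul_left a)
  rw [pow_succ', mul_div_assoc']
  gcongr
  lia

lemma cosh_le_cosh_add_mul_sinh_add {a b c d u : ℝ} (ha : 0 < a) (hc : 0 < c) (hb : 1 ≤ b)
    (hlower : (a - c) ^ 2 ≤ u ^ 2) (hupper : u ^ 2 ≤ (a + c) ^ 2)
    (hquad : u ^ 2 ≤ a ^ 2 + 2 * a * d + b * c ^ 2) :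
    cosh u ≤ cosh a + d * sinh a + b * cosh a * (exp c - 1 - c) := by
  set r := (u ^ 2 - a ^ 2 - c ^ 2) / (2 * a * c) with hr
  have hr_le_one : r ≤ 1 := by rw [hr, div_le_one (by positivity)]; linarith
  have hsinh_a : 0 ≤ sinh a := sinh_nonneg_iff.2 ha.le
  have hsinh_c : 0 ≤ sinh c - c := sub_nonneg.2 (self_le_sinh_iff.2 hc.le)
  have hd : c * r ≤ d + (b - 1) * (c ^ 2 / 2) / a := by
    calc c * r = (u ^ 2 - a ^ 2 - c ^ 2) / (2 * a) := by rw [hr]; field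
      _ ≤ (2 * a * d + (b - 1) * c ^ 2) / (2 * a) := by gcongr; linarith
      _ = d + (b - 1) * (c ^ 2 / 2) / a := by field
  have hexp : c ^ 2 / 2 ≤ exp c - 1 - c := by linarith [quadratic_le_exp_of_nonneg hc.le]
  calc cosh u ≤ cosh a * cosh c + r * sinh a * (sinh c - c) + c * r * sinh a := by
        linarith [cosh_le_cosh_mul_cosh_add ha hc hlower hupper]
    _ ≤ cosh a * cosh c + cosh a * (sinh c - c)
        + (d + (b - 1) * (c ^ 2 / 2) / a) * sinh a := by
        gcongr
        exact (mul_le_of_le_one_left hsinh_a hr_le_one).trans (sinh_lt_cosh a).le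
    _ = cosh a * (exp c - c) + d * sinh a + (b - 1) * (c ^ 2 / 2) * (sinh a / a) := by
        rw [← cosh_add_sinh c]; ring
    _ ≤ cosh a * (exp c - c) + d * sinh a + (b - 1) * (exp c - 1 - c) * cosh a := by
        have hsinh_div : sinh a / a ≤ cosh a := (div_le_iff₀' ha).2 (sinh_le_mul_cosh ha.le)
        have hb_sub : 0 ≤ b - 1 := sub_nonneg.2 hb
        have hquad_nonneg : 0 ≤ c ^ 2 / 2 := by positivity
        exact add_le_add_right (mul_le_mul (mul_le_mul_of_nonneg_left hexp hb_sub) hsinh_div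
          (by positivity) (mul_nonneg hb_sub (hquad_nonneg.trans hexp))) _
    _ = _ := by ring

/-- The function `(eˣ - x - 1) / x²` of the Bennett and Freedman inequalities, which controls the
exponential remainder by the second moment of a bounded variable. Its value at `0` is the junk
value `0` instead of the limit `1 / 2`. -/
noncomputable def bennettRatio (x : ℝ) : ℝ := (exp x - x - 1) / x ^ 2

lemma bennettRatio_nonneg (x : ℝ) : 0 ≤ bennettRatio x :=
  div_nonneg (by linarith [add_one_le_exp x]) (sq_nonneg x)

lemma frakC_eq (p ρ : ℝ) : frakC p ρ = 2 ^ (p + 1) * bennettRatio (2 * ρ) :=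
  mul_div_assoc _ _ _

lemma hasSum_exp_sub_one_sub (x : ℝ) :
    HasSum (fun n : ℕ => x ^ (n + 2) / ((n + 2).factorial : ℝ)) (exp x - 1 - x) := by
  have h := NormedSpace.expSeries_div_hasSum_exp x
  rw [← Real.exp_eq_exp_ℝ] at h
  simpa [Finset.sum_range_succ, sub_sub] using (hasSum_nat_add_iff' 2).2 h

lemma exp_sub_one_sub_le_bennettRatio_mul_sq {x y : ℝ} (hx : 0 ≤ x) (hxy : x ≤ y) :
    exp x - 1 - x ≤ bennettRatio y * x ^ 2 := by
  rcases hx.eq_or_lt with rfl | hx_pos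
  · simp
  have hy : 0 < y := hx_pos.trans_le hxy
  suffices h : (exp x - 1 - x) * y ^ 2 ≤ (exp y - 1 - y) * x ^ 2 by
    rw [bennettRatio, div_mul_eq_mul_div, le_div_iff₀ (by positivity)]
    linarith
  refine hasSum_le (fun n => ?_) ((hasSum_exp_sub_one_sub x).mul_right _)
    ((hasSum_exp_sub_one_sub y).mul_right _)
  have hpow : x ^ n ≤ y ^ n := pow_le_pow_left₀ hx hxy n
  calc x ^ (n + 2) / ((n + 2).factorial : ℝ) * y ^ 2
      = x ^ n * (x ^ 2 * y ^ 2) / ((n + 2).factorial : ℝ) := by ring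
    _ ≤ y ^ n * (x ^ 2 * y ^ 2) / ((n + 2).factorial : ℝ) := by gcongr
    _ = y ^ (n + 2) / ((n + 2).factorial : ℝ) * x ^ 2 := by ring

lemma norm_sinh_div_smul_le {E : Type*} [SeminormedAddCommGroup E] [NormedSpace ℝ E] {r : ℝ}
    {y : E} (hy : ‖y‖ ≤ r) : ‖(sinh r / r) • y‖ ≤ sinh r := by
  have hr : 0 ≤ r := (norm_nonneg y).trans hy
  have hsinh : 0 ≤ sinh r := sinh_nonneg_iff.2 hr
  rw [norm_smul, Real.norm_of_nonneg (by positivity), div_mul_eq_mul_div]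
  exact div_le_of_le_mul₀ hr hsinh (by gcongr)

variable {B : Type*} [NormedAddCommGroup B]

lemma continuous_sinh_norm_div_norm_smul {E : Type*} [SeminormedAddCommGroup E] [NormedSpace ℝ E]
    {J : B → E} (hJ : Continuous J) (hJ_norm : ∀ x, ‖J x‖ ≤ ‖x‖) :
    Continuous fun x => (sinh ‖x‖ / ‖x‖) • J x := by
  have hsinh : Continuous fun x : B => sinh ‖x‖ := continuous_sinh.comp continuous_norm
  refine continuous_iff_continuousAt.2 fun x => ?_
  rcases eq_or_ne x 0 with rfl | hx
  · have hlim : Tendsto (fun x : B => sinh ‖x‖) (𝓝 0) (𝓝 0) := by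
      simpa only [norm_zero, sinh_zero] using hsinh.tendsto 0
    rw [ContinuousAt, norm_zero, div_zero, zero_smul]
    exact squeeze_zero_norm (fun x => norm_sinh_div_smul_le (hJ_norm x)) hlim
  · exact (hsinh.continuousAt.div continuous_norm.continuousAt (norm_ne_zero_iff.2 hx)).smul
      hJ.continuousAt

variable [NormedSpace ℝ B] {β : ℝ}

theorem IsTwoSmooth.exists_continuous_cosh_norm_add_le (hB : IsTwoSmooth B β) :
    ∃ L : B → StrongDual ℝ B, Continuous L ∧ (∀ x, ‖L x‖ ≤ sinh ‖x‖) ∧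
      ∀ x y, cosh ‖x + y‖ ≤
        cosh ‖x‖ + L x y + β ^ 2 * cosh ‖x‖ * (exp ‖y‖ - 1 - ‖y‖) := by
  obtain ⟨J, hJ_cont, hJ_norm, hJ⟩ := hB.exists_continuous_dual
  refine ⟨fun x => (sinh ‖x‖ / ‖x‖) • J x, continuous_sinh_norm_div_norm_smul hJ_cont hJ_norm,
    fun x => norm_sinh_div_smul_le (hJ_norm x), fun x y => ?_⟩
  simp only [FunLike.coe_smul, Pi.smul_apply, smul_eq_mul]
  rcases eq_or_ne y 0 with rfl | hy
  · simp
  have hβ : 1 ≤ β ^ 2 := hB.one_le_sq hy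
  rcases eq_or_ne x 0 with rfl | hx
  · have hexp : 0 ≤ exp ‖y‖ - 1 - ‖y‖ := by linarith [add_one_le_exp ‖y‖]
    have hcosh : cosh ‖y‖ - 1 ≤ exp ‖y‖ - 1 - ‖y‖ := by
      linarith [cosh_add_sinh ‖y‖, self_le_sinh_iff.2 (norm_nonneg y)]
    simp only [zero_add, norm_zero, cosh_zero, div_zero, zero_mul, add_zero, mul_one]
    linarith [le_mul_of_one_le_left hexp hβ]
  have hx_pos : 0 < ‖x‖ := norm_pos_iff.2 hx
  calc cosh ‖x + y‖
      ≤ cosh ‖x‖ + J x y / ‖x‖ * sinh ‖x‖ + β ^ 2 * cosh ‖x‖ * (exp ‖y‖ - 1 - ‖y‖) := by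
        refine cosh_le_cosh_add_mul_sinh_add hx_pos (norm_pos_iff.2 hy) hβ ?_ ?_ ?_
        · rw [sq_le_sq, abs_norm]
          simpa using abs_norm_sub_norm_le x (-y)
        · gcongr
          exact norm_add_le x y
        · rw [mul_assoc 2, mul_div_cancel₀ _ hx_pos.ne']
          exact hJ x y
    _ = _ := by ring

end CoshEstimates

section ConditionalExpectation

variable {Ω : Type*} {m mΩ : MeasurableSpace Ω} {P : Measure Ω}

lemma exists_stronglyMeasurable_pos_mul_norm_le_one {E F : Type*} [SeminormedAddCommGroup E]
    [SeminormedAddCommGroup F] {f : Ω → E} {g : Ω → F} (hf : StronglyMeasurable[m] f)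
    (hg : StronglyMeasurable[m] g) :
    ∃ c : Ω → ℝ, StronglyMeasurable[m] c ∧
      ∀ ω, 0 < c ω ∧ c ω ≤ 1 ∧ c ω * ‖f ω‖ ≤ 1 ∧ c ω * ‖g ω‖ ≤ 1 := by
  refine ⟨fun ω => (1 + ‖f ω‖ + ‖g ω‖)⁻¹,
    ((stronglyMeasurable_const.add hf.norm).add hg.norm).measurable.inv.stronglyMeasurable,
    fun ω => ⟨by positivity, inv_le_one_of_one_le₀ ?_, inv_mul_le_one_of_le₀ ?_ (by positivity),
      inv_mul_le_one_of_le₀ ?_ (by positivity)⟩⟩ <;>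
  linarith [norm_nonneg (f ω), norm_nonneg (g ω)]

lemma condExp_le_mul_condExp_add [IsFiniteMeasure P] (hm : m ≤ mΩ) {U W a b : Ω → ℝ}
    (hU : Integrable U P) (hW : Integrable W P) (ha : StronglyMeasurable[m] a)
    (hb : StronglyMeasurable[m] b) (h : ∀ᵐ ω ∂P, U ω ≤ a ω * W ω + b ω) :
    ∀ᵐ ω ∂P, (P[U | m]) ω ≤ a ω * (P[W | m]) ω + b ω := by
  -- The `m`-measurable weight `c` makes the coefficients bounded, so that they can be pulled out.
  obtain ⟨c, hc, hc_bound⟩ := exists_stronglyMeasurable_pos_mul_norm_le_one ha hb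
  choose hc_pos hc_le_one hca_le_one hcb_le_one using hc_bound
  have hc_norm (ω : Ω) : ‖c ω‖ = c ω := Real.norm_of_nonneg (hc_pos ω).le
  have hcU : Integrable (c * U) P := hU.bdd_mul (hc.mono hm).aestronglyMeasurable
    (ae_of_all _ fun ω => (hc_norm ω).trans_le (hc_le_one ω))
  have hcaW : Integrable (c * a * W) P := hW.bdd_mul ((hc.mul ha).mono hm).aestronglyMeasurable
    (ae_of_all _ fun ω => (norm_mul_le _ _).trans ((hc_norm ω).symm ▸ hca_le_one ω))
  have hcb : Integrable (c * b) P := .of_bound ((hc.mul hb).mono hm).aestronglyMeasurable 1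
    (ae_of_all _ fun ω => (norm_mul_le _ _).trans ((hc_norm ω).symm ▸ hcb_le_one ω))
  have hmono : P[c * U | m] ≤ᵐ[P] P[c * a * W + c * b | m] := by
    refine condExp_mono hcU (hcaW.add hcb) ?_
    filter_upwards [h] with ω hω
    simp only [Pi.mul_apply, Pi.add_apply]
    linarith [mul_le_mul_of_nonneg_left hω (hc_pos ω).le]
  filter_upwards [hmono, condExp_add hcaW hcb m,
    condExp_mul_of_stronglyMeasurable_left hc hcU hU,
    condExp_mul_of_stronglyMeasurable_left (hc.mul ha) hcaW hW] with ω hle hadd hpullU hpullW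
  rw [hadd, hpullU, Pi.add_apply, hpullW, condExp_of_stronglyMeasurable hm (hc.mul hb) hcb] at hle
  simp only [Pi.mul_apply] at hle
  exact le_of_mul_le_mul_left (by linarith) (hc_pos ω)

variable {B : Type*} [NormedAddCommGroup B]

lemma norm_sub_sq_le_rpow_add_rpow {p : ℝ} (hp : p ≤ 2)
    {x y : B} (hx : ‖x‖ ≤ 1) (hy : ‖y‖ ≤ 1) : ‖x - y‖ ^ 2 ≤ 2 * (‖x‖ ^ p + ‖y‖ ^ p) := by
  have hsq_le {t : ℝ} (ht : 0 ≤ t) (ht_le : t ≤ 1) : t ^ 2 ≤ t ^ p := by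
    rcases ht.eq_or_lt with rfl | ht_pos
    · simpa using rpow_nonneg le_rfl p
    · rw [← rpow_two]
      exact rpow_le_rpow_of_exponent_ge ht_pos ht_le hp
  calc ‖x - y‖ ^ 2 ≤ (‖x‖ + ‖y‖) ^ 2 := by gcongr; exact norm_sub_le x y
    _ ≤ 2 * (‖x‖ ^ 2 + ‖y‖ ^ 2) := add_sq_le
    _ ≤ 2 * (‖x‖ ^ p + ‖y‖ ^ p) := by
        gcongr
        exacts [hsq_le (norm_nonneg x) hx, hsq_le (norm_nonneg y) hy]

lemma integrable_norm_rpow_of_norm_le_one [IsFiniteMeasure P] {ζ : Ω → B} {p : ℝ} (hp : 0 ≤ p)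
    (hζ : AEStronglyMeasurable ζ P) (hζ_le : ∀ᵐ ω ∂P, ‖ζ ω‖ ≤ 1) :
    Integrable (fun ω => ‖ζ ω‖ ^ p) P := by
  refine .of_bound (hζ.norm.aemeasurable.pow_const p).aestronglyMeasurable 1 ?_
  filter_upwards [hζ_le] with ω hω
  rw [Real.norm_of_nonneg (by positivity)]
  exact rpow_le_one (norm_nonneg _) hω hp

lemma integrable_cosh_norm_of_norm_le [IsFiniteMeasure P] {S : Ω → B} {R : ℝ}
    (hS : AEStronglyMeasurable S P) (hS_le : ∀ᵐ ω ∂P, ‖S ω‖ ≤ R) :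
    Integrable (fun ω => cosh ‖S ω‖) P := by
  refine .of_bound (continuous_cosh.comp_aestronglyMeasurable hS.norm) (cosh R) ?_
  filter_upwards [hS_le] with ω hω
  rw [Real.norm_of_nonneg (cosh_pos _).le, cosh_le_cosh, abs_norm]
  exact hω.trans (le_abs_self R)

variable [NormedSpace ℝ B]

lemma norm_condExp_sub_smul_condExp_sub_le [IsFiniteMeasure P] [CompleteSpace B] (hm : m ≤ mΩ)
    {f X z : Ω → B} {W a α γ : Ω → ℝ} (hf : Integrable f P) (hX : Integrable X P)
    (hW : Integrable W P) (ha : StronglyMeasurable[m] a) (hz : StronglyMeasurable[m] z)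
    (hα : StronglyMeasurable[m] α) (hγ : StronglyMeasurable[m] γ)
    (h : ∀ᵐ ω ∂P, ‖f ω - a ω • (X ω - z ω)‖ ≤ α ω * W ω + γ ω) :
    ∀ᵐ ω ∂P, ‖(P[f | m]) ω - a ω • ((P[X | m]) ω - z ω)‖ ≤ α ω * (P[W | m]) ω + γ ω := by
  obtain ⟨c, hc, hc_bound⟩ := exists_stronglyMeasurable_pos_mul_norm_le_one ha (ha.smul hz)
  choose hc_pos hc_le_one hca_le_one hcaz_le_one using hc_bound
  have hc_norm (ω : Ω) : ‖c ω‖ = c ω := Real.norm_of_nonneg (hc_pos ω).le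
  have hcf : Integrable (c • f) P := hf.bdd_smul 1 (hc.mono hm).aestronglyMeasurable
    (ae_of_all _ fun ω => (hc_norm ω).trans_le (hc_le_one ω))
  have hcaX : Integrable ((c * a) • X) P :=
    hX.bdd_smul 1 ((hc.mul ha).mono hm).aestronglyMeasurable
      (ae_of_all _ fun ω => (norm_mul_le _ _).trans ((hc_norm ω).symm ▸ hca_le_one ω))
  have hcaz_meas : StronglyMeasurable[m] (c • a • z) := hc.smul (ha.smul hz)
  have hcaz : Integrable (c • a • z) P := .of_bound (hcaz_meas.mono hm).aestronglyMeasurable 1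
    (ae_of_all _ fun ω => (norm_smul_le _ _).trans ((hc_norm ω).symm ▸ hcaz_le_one ω))
  set D : Ω → B := c • f - ((c * a) • X - c • a • z) with hD
  have hD_eq (y x : B) (ω : Ω) :
      c ω • y - ((c ω * a ω) • x - c ω • a ω • z ω) = c ω • (y - a ω • (x - z ω)) := by module
  have hDi : Integrable D P := hcf.sub (hcaX.sub hcaz)
  have hD_le : ∀ᵐ ω ∂P, (P[fun ω => ‖D ω‖ | m]) ω ≤ (c * α) ω * (P[W | m]) ω + (c * γ) ω := by
    refine condExp_le_mul_condExp_add hm hDi.norm hW (hc.mul hα) (hc.mul hγ) ?_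
    filter_upwards [h] with ω hω
    simp only [hD, Pi.sub_apply, Pi.smul_apply', Pi.mul_apply, hD_eq, norm_smul, hc_norm]
    linarith [mul_le_mul_of_nonneg_left hω (hc_pos ω).le]
  filter_upwards [hD_le, norm_condExp_le (m := m) (μ := P) D, condExp_sub hcf (hcaX.sub hcaz) m,
    condExp_sub hcaX hcaz m,
    condExp_smul_of_aestronglyMeasurable_left hc.aestronglyMeasurable hcf hf,
    condExp_smul_of_aestronglyMeasurable_left (hc.mul ha).aestronglyMeasurable hcaX hX]
    with ω hle hnorm hsub hsub' hpullf hpullX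
  rw [hsub, Pi.sub_apply, hsub', Pi.sub_apply, hpullf, hpullX,
    condExp_of_stronglyMeasurable hm hcaz_meas hcaz] at hnorm
  simp only [Pi.smul_apply', Pi.mul_apply, hD_eq, norm_smul, hc_norm] at hnorm hle
  exact le_of_mul_le_mul_left (by linarith) (hc_pos ω)

lemma condExp_clm_apply_eq_zero {E F : Type*} [NormedAddCommGroup E] [NormedSpace ℝ E]
    [CompleteSpace E] [NormedAddCommGroup F] [NormedSpace ℝ F] [CompleteSpace F]
    {L : Ω → E →L[ℝ] F} {D : Ω → E} (hL : StronglyMeasurable[m] L)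
    (hLD : Integrable (fun ω => L ω (D ω)) P) (hD : Integrable D P) (hD_zero : P[D | m] =ᵐ[P] 0) :
    P[fun ω => L ω (D ω) | m] =ᵐ[P] 0 := by
  refine (condExp_bilin_of_stronglyMeasurable_left
    (ContinuousLinearMap.id ℝ (E →L[ℝ] F)) hL hLD hD).trans ?_
  filter_upwards [hD_zero] with ω hω
  rw [hω, Pi.zero_apply, map_zero, Pi.zero_apply]

lemma condExp_norm_sub_condExp_sq_le [IsFiniteMeasure P] [CompleteSpace B] (hm : m ≤ mΩ)
    {ζ : Ω → B} {p : ℝ} (hp1 : 1 ≤ p) (hp2 : p ≤ 2) (hζ : AEStronglyMeasurable ζ P)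
    (hζ_le : ∀ᵐ ω ∂P, ‖ζ ω‖ ≤ 1) :
    ∀ᵐ ω ∂P, (P[fun ω' => ‖ζ ω' - (P[ζ | m]) ω'‖ ^ 2 | m]) ω ≤
      4 * (P[fun ω' => ‖ζ ω'‖ ^ p | m]) ω := by
  have hE_meas : StronglyMeasurable[m] (P[ζ | m]) := stronglyMeasurable_condExp
  have hE_le : ∀ᵐ ω ∂P, ‖(P[ζ | m]) ω‖ ≤ 1 := ae_bdd_norm_condExp_of_ae_bdd_norm hζ_le
  have hζp := integrable_norm_rpow_of_norm_le_one (zero_le_one.trans hp1) hζ hζ_le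
  have hEp := integrable_norm_rpow_of_norm_le_one (zero_le_one.trans hp1)
    (hE_meas.mono hm).aestronglyMeasurable hE_le
  have hpoint : ∀ᵐ ω ∂P,
      ‖ζ ω - (P[ζ | m]) ω‖ ^ 2 ≤ 2 * ‖ζ ω‖ ^ p + 2 * ‖(P[ζ | m]) ω‖ ^ p := by
    filter_upwards [hζ_le, hE_le] with ω hζω hEω
    linarith [norm_sub_sq_le_rpow_add_rpow hp2 hζω hEω]
  have hsq : Integrable (fun ω => ‖ζ ω - (P[ζ | m]) ω‖ ^ 2) P :=
    ((hζp.const_mul 2).add (hEp.const_mul 2)).mono'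
      ((hζ.sub (hE_meas.mono hm).aestronglyMeasurable).norm.pow 2)
      (hpoint.mono fun ω hω => by simpa using hω)
  filter_upwards [Integrable.norm_condExp_rpow_le (m := m) hp1 hζp,
    condExp_le_mul_condExp_add hm hsq hζp stronglyMeasurable_const
      ((hE_meas.norm.measurable.pow_const p).stronglyMeasurable.const_mul 2) hpoint]
    with ω hjensen hle
  linarith

theorem IsTwoSmooth.condExp_cosh_norm_add_le {β : ℝ} (hB : IsTwoSmooth B β) [IsFiniteMeasure P]
    [CompleteSpace B] (hm : m ≤ mΩ) {S D : Ω → B} {R b : ℝ} {V : Ω → ℝ}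
    (hS : StronglyMeasurable[m] S) (hS_le : ∀ᵐ ω ∂P, ‖S ω‖ ≤ R)
    (hD : AEStronglyMeasurable D P) (hD_le : ∀ᵐ ω ∂P, ‖D ω‖ ≤ b) (hD_zero : P[D | m] =ᵐ[P] 0)
    (hV : ∀ᵐ ω ∂P, (P[fun ω' => ‖D ω'‖ ^ 2 | m]) ω ≤ V ω) :
    ∀ᵐ ω ∂P, (P[fun ω' => cosh ‖S ω' + D ω'‖ | m]) ω ≤
      cosh ‖S ω‖ * (1 + β ^ 2 * bennettRatio b * V ω) := by
  obtain ⟨L, hL_cont, hL_norm, hL⟩ := hB.exists_continuous_cosh_norm_add_le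
  have hS' : AEStronglyMeasurable S P := (hS.mono hm).aestronglyMeasurable
  have hLS : StronglyMeasurable[m] fun ω => L (S ω) := hL_cont.comp_stronglyMeasurable hS
  have hDi : Integrable D P := .of_bound hD b hD_le
  have hD_sq : Integrable (fun ω => ‖D ω‖ ^ 2) P := by
    refine .of_bound (hD.norm.pow 2) (b ^ 2) (hD_le.mono fun ω hω => ?_)
    rw [norm_pow, norm_norm]
    gcongr
  have hcosh : Integrable (fun ω => cosh ‖S ω + D ω‖) P :=
    integrable_cosh_norm_of_norm_le (R := R + b) (hS'.add hD)
      (by filter_upwards [hS_le, hD_le] with ω using norm_add_le_of_le)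
  have hLD : Integrable (fun ω => L (S ω) (D ω)) P := by
    refine .of_bound ((ContinuousLinearMap.id ℝ (StrongDual ℝ B)).aestronglyMeasurable_comp₂
      (hLS.mono hm).aestronglyMeasurable hD) (sinh R * b) ?_
    filter_upwards [hS_le, hD_le] with ω hSω hDω
    exact (L (S ω)).le_of_opNorm_le_of_le ((hL_norm _).trans (sinh_le_sinh.2 hSω)) hDω
  have hcosh_S : StronglyMeasurable[m] fun ω => cosh ‖S ω‖ :=
    continuous_cosh.comp_stronglyMeasurable hS.norm
  have hpoint : ∀ᵐ ω ∂P, cosh ‖S ω + D ω‖ - L (S ω) (D ω) ≤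
      β ^ 2 * bennettRatio b * cosh ‖S ω‖ * ‖D ω‖ ^ 2 + cosh ‖S ω‖ := by
    filter_upwards [hD_le] with ω hω
    have hexp := exp_sub_one_sub_le_bennettRatio_mul_sq (norm_nonneg (D ω)) hω
    have hcoef : 0 ≤ β ^ 2 * cosh ‖S ω‖ := mul_nonneg (sq_nonneg β) (cosh_pos _).le
    linarith [hL (S ω) (D ω), mul_le_mul_of_nonneg_left hexp hcoef]
  filter_upwards [condExp_le_mul_condExp_add hm (hcosh.sub hLD) hD_sq (hcosh_S.const_mul _)
    hcosh_S hpoint, condExp_sub hcosh hLD m, condExp_clm_apply_eq_zero hLS hLD hDi hD_zero, hV]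
    with ω hle hsub hzero hVω
  have hcoef : 0 ≤ β ^ 2 * bennettRatio b * cosh ‖S ω‖ :=
    mul_nonneg (mul_nonneg (sq_nonneg β) (bennettRatio_nonneg b)) (cosh_pos _).le
  rw [hsub, Pi.sub_apply, hzero, Pi.zero_apply, sub_zero] at hle
  linarith [mul_le_mul_of_nonneg_left hVω hcoef]

end ConditionalExpectation

section Martingale

variable {Ω : Type*} {mΩ : MeasurableSpace Ω} {P : Measure Ω} {ℱ : Filtration ℕ mΩ}
  {B : Type*} [NormedAddCommGroup B] [NormedSpace ℝ B] [CompleteSpace B] {M : ℕ → Ω → B}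

lemma condExp_add_one_sub_ae_eq_zero_of_martingale (hM : Martingale M ℱ P) (n : ℕ) :
    P[M (n + 1) - M n | ℱ n] =ᵐ[P] 0 := by
  filter_upwards [condExp_sub (hM.integrable (n + 1)) (hM.integrable n) (ℱ n),
    hM.condExp_ae_eq n.le_succ, hM.condExp_ae_eq (le_refl n)] with ω hsub hsucc hself
  rw [hsub, Pi.sub_apply, hsucc, hself, sub_self, Pi.zero_apply]

variable [IsFiniteMeasure P]

lemma supermartingale_mul_exp_neg_sum {Y V : ℕ → Ω → ℝ} (hY : StronglyAdapted ℱ Y)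
    (hY_int : ∀ n, Integrable (Y n) P) (hY_nonneg : ∀ n ω, 0 ≤ Y n ω) (hV : StronglyAdapted ℱ V)
    (hV_nonneg : ∀ n, ∀ᵐ ω ∂P, 0 ≤ V n ω)
    (h : ∀ n, ∀ᵐ ω ∂P, (P[Y (n + 1) | ℱ n]) ω ≤ Y n ω * (1 + V n ω)) :
    Supermartingale (fun n ω => Y n ω * exp (-∑ i ∈ Finset.range n, V i ω)) ℱ P := by
  set E : ℕ → Ω → ℝ := fun n ω => exp (-∑ i ∈ Finset.range n, V i ω) with hE
  have hE_meas {n k : ℕ} (hk : k ≤ n + 1) : StronglyMeasurable[ℱ n] (E k) :=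
    continuous_exp.comp_stronglyMeasurable (Finset.stronglyMeasurable_fun_sum _ fun i hi =>
      (hV i).mono (ℱ.mono (by grind))).neg
  have hE_le (n : ℕ) : ∀ᵐ ω ∂P, ‖E n ω‖ ≤ 1 := by
    filter_upwards [ae_all_iff.2 hV_nonneg] with ω hω
    rw [Real.norm_of_nonneg (exp_pos _).le, exp_le_one_iff, neg_nonpos]
    exact Finset.sum_nonneg fun i _ => hω i
  have hint (n : ℕ) : Integrable (Y n * E n) P :=
    (hY_int n).mul_bdd ((hE_meas n.le_succ).mono (ℱ.le n)).aestronglyMeasurable (hE_le n)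
  refine supermartingale_nat (fun n => (hY n).mul (hE_meas n.le_succ)) hint fun n => ?_
  filter_upwards [h n, condExp_mul_of_stronglyMeasurable_right (hE_meas le_rfl) (hint (n + 1))
    (hY_int (n + 1))] with ω hω hpull
  calc (P[Y (n + 1) * E (n + 1) | ℱ n]) ω = (P[Y (n + 1) | ℱ n]) ω * E (n + 1) ω := hpull
    _ ≤ Y n ω * (1 + V n ω) * E (n + 1) ω := by
        gcongr
    _ = Y n ω * E n ω * ((V n ω + 1) * exp (-V n ω)) := by
        simp only [hE, Finset.sum_range_succ, neg_add, exp_add]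
        ring
    _ ≤ Y n ω * E n ω * (exp (V n ω) * exp (-V n ω)) := by
        have : 0 ≤ Y n ω * E n ω := mul_nonneg (hY_nonneg n ω) (exp_pos _).le
        gcongr
        exact add_one_le_exp _
    _ = Y n ω * E n ω := by rw [← exp_add, add_neg_cancel, exp_zero, mul_one]

theorem IsTwoSmooth.supermartingale_cosh_norm_mul_exp {β : ℝ} (hB : IsTwoSmooth B β)
    (hM : Martingale M ℱ P) {R b : ℝ} (hM_zero : ∀ᵐ ω ∂P, ‖M 0 ω‖ ≤ R)
    (hM_diff : ∀ n, ∀ᵐ ω ∂P, ‖M (n + 1) ω - M n ω‖ ≤ b) {V : ℕ → Ω → ℝ}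
    (hV : StronglyAdapted ℱ V)
    (hM_sq : ∀ n, ∀ᵐ ω ∂P, (P[fun ω' => ‖M (n + 1) ω' - M n ω'‖ ^ 2 | ℱ n]) ω ≤ V n ω) :
    Supermartingale (fun n ω => cosh ‖M n ω‖ *
      exp (-∑ i ∈ Finset.range n, β ^ 2 * bennettRatio b * V i ω)) ℱ P := by
  have hM_le (n : ℕ) : ∀ᵐ ω ∂P, ‖M n ω‖ ≤ R + n * b := by
    filter_upwards [hM_zero, ae_all_iff.2 hM_diff] with ω hω_zero hω_diff
    induction n with
    | zero => simpa using hω_zero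
    | succ n ih =>
      push_cast
      linarith [norm_le_norm_add_norm_sub' (M (n + 1) ω) (M n ω), hω_diff n]
  have hM_meas (n : ℕ) : AEStronglyMeasurable (M n) P := (hM.integrable n).aestronglyMeasurable
  refine supermartingale_mul_exp_neg_sum
    (fun n => continuous_cosh.comp_stronglyMeasurable (hM.stronglyAdapted n).norm)
    (fun n => integrable_cosh_norm_of_norm_le (hM_meas n) (hM_le n))
    (fun n ω => (cosh_pos _).le) (fun n => (hV n).const_mul _) (fun n => ?_) fun n => ?_
  · filter_upwards [hM_sq n, condExp_nonneg (m := ℱ n) (μ := P)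
      (f := fun ω => ‖M (n + 1) ω - M n ω‖ ^ 2) (ae_of_all _ fun ω => by positivity)]
      with ω hle hnonneg
    have := bennettRatio_nonneg b
    exact mul_nonneg (by positivity) (hnonneg.trans hle)
  · filter_upwards [hB.condExp_cosh_norm_add_le (ℱ.le n) (hM.stronglyAdapted n) (hM_le n)
      ((hM_meas (n + 1)).sub (hM_meas n)) (hM_diff n)
      (condExp_add_one_sub_ae_eq_zero_of_martingale hM n) (hM_sq n)] with ω hω
    simpa only [Pi.sub_apply, add_sub_cancel] using hω

theorem IsTwoSmooth.supermartingale_cosh_mul_norm_mul_exp {β : ℝ} (hB : IsTwoSmooth B β)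
    (hM : Martingale M ℱ P) {R b : ℝ} (hM_zero : ∀ᵐ ω ∂P, ‖M 0 ω‖ ≤ R)
    (hM_diff : ∀ n, ∀ᵐ ω ∂P, ‖M (n + 1) ω - M n ω‖ ≤ b) {V : ℕ → Ω → ℝ}
    (hV : StronglyAdapted ℱ V)
    (hM_sq : ∀ n, ∀ᵐ ω ∂P, (P[fun ω' => ‖M (n + 1) ω' - M n ω'‖ ^ 2 | ℱ n]) ω ≤ V n ω)
    {ρ : ℝ} (hρ : 0 ≤ ρ) :
    Supermartingale (fun n ω => cosh (ρ * ‖M n ω‖) *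
      exp (-∑ i ∈ Finset.range n, β ^ 2 * bennettRatio (ρ * b) * (ρ ^ 2 * V i ω))) ℱ P := by
  have hnorm (x : B) : ‖ρ • x‖ = ρ * ‖x‖ := norm_smul_of_nonneg hρ x
  have hscaled := hB.supermartingale_cosh_norm_mul_exp (hM.smul ρ) (R := ρ * R) (b := ρ * b)
    (V := fun n ω => ρ ^ 2 * V n ω) ?_ (fun n => ?_) (fun n => (hV n).const_mul _) fun n => ?_
  · simpa only [Pi.smul_apply, hnorm] using hscaled
  · filter_upwards [hM_zero] with ω hω
    rw [Pi.smul_apply, Pi.smul_apply, hnorm]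
    gcongr
  · filter_upwards [hM_diff n] with ω hω
    rw [Pi.smul_apply, Pi.smul_apply, Pi.smul_apply, Pi.smul_apply, ← smul_sub, hnorm]
    gcongr
  · simp only [Pi.smul_apply, ← smul_sub, hnorm, mul_pow]
    filter_upwards [hM_sq n, condExp_smul (ρ ^ 2) (fun ω => ‖M (n + 1) ω - M n ω‖ ^ 2) (ℱ n)]
      with ω hle hsmul
    refine (Eq.le hsmul).trans ?_
    rw [Pi.smul_apply, smul_eq_mul]
    gcongr

end Martingale

section Truncation

variable {B : Type*} [NormedAddCommGroup B] {p : ℝ}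

lemma truncB_eq_inv_max (w : B) : truncB w = (max 1 ‖w‖)⁻¹ := by
  rcases eq_or_ne w 0 with rfl | hw
  · simp [truncB]
  · have hw_pos : 0 < ‖w‖ := norm_pos_iff.2 hw
    rw [truncB, if_neg hw]
    rcases le_total 1 ‖w‖ with h | h
    · rw [min_eq_left h, max_eq_right h, one_div]
    · rw [min_eq_right h, max_eq_left h, div_self hw_pos.ne', inv_one]

lemma Kp_nonneg (hp : 1 ≤ p) : 0 ≤ Kp p := by
  have : 0 ≤ p - 1 := sub_nonneg.2 hp
  unfold Kp
  positivity

lemma sub_one_le_Kp_mul_rpow (hp : 1 ≤ p) {t : ℝ} (ht : 0 ≤ t) : t - 1 ≤ Kp p * t ^ p := by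
  rcases hp.eq_or_lt with rfl | hp
  · simp [Kp]
  have hp_sub_pos : 0 < p - 1 := sub_pos.2 hp
  set q : ℝ := (p - 1) / p with hq
  have hp_eq : p - 1 = p * q := by rw [hq]; field_simp
  have hq_pos : 0 < q := by positivity
  -- The maximum of `t ↦ (t - 1) / t ^ p` is attained at `1 / q`.
  have hbernoulli : 1 + p * (t * q - 1) ≤ (t * q) ^ p := by
    simpa using one_add_mul_self_le_rpow_one_add (s := t * q - 1)
      (by linarith [mul_nonneg ht hq_pos.le]) hp.le
  have hpow : (t * q) ^ p = (p - 1) * (Kp p * t ^ p) := by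
    rw [mul_rpow ht hq_pos.le, Kp, ← hq, ← sub_add_cancel p 1, rpow_add_one hq_pos.ne',
      sub_add_cancel, hp_eq]
    field_simp
  refine le_of_mul_le_mul_left ?_ hp_sub_pos
  linarith [congrArg (· * t) hp_eq]

variable [NormedSpace ℝ B]

/-- Projection onto the closed unit ball: `w` is unchanged if `‖w‖ ≤ 1` and is rescaled to norm `1`
otherwise. -/
noncomputable def clip (w : B) : B := truncB w • w

lemma continuous_clip : Continuous (clip : B → B) := by
  unfold clip
  simp only [truncB_eq_inv_max]
  exact (Continuous.inv₀ (by fun_prop) fun _ => by positivity).smul continuous_id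

lemma norm_clip (w : B) : ‖clip w‖ = (max 1 ‖w‖)⁻¹ * ‖w‖ := by
  rw [clip, truncB_eq_inv_max, norm_smul_of_nonneg (by positivity)]

lemma norm_clip_le_one (w : B) : ‖clip w‖ ≤ 1 := by
  rw [norm_clip]
  exact inv_mul_le_one_of_le₀ (le_max_right _ _) (by positivity)

lemma norm_clip_le (w : B) : ‖clip w‖ ≤ ‖w‖ := by
  rw [norm_clip]
  exact mul_le_of_le_one_left (norm_nonneg w) (inv_le_one_of_one_le₀ (le_max_left _ _))

lemma norm_clip_sub_le (hp : 1 ≤ p) (w : B) : ‖clip w - w‖ ≤ Kp p * ‖w‖ ^ p := by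
  rcases le_total ‖w‖ 1 with h | h
  · have hK := Kp_nonneg hp
    rw [clip, truncB_eq_inv_max, max_eq_left h, inv_one, one_smul, sub_self, norm_zero]
    positivity
  · calc ‖clip w - w‖ = ‖w‖ - 1 := by
          have hsub : clip w - w = -(1 - ‖w‖⁻¹) • w := by
            rw [clip, truncB_eq_inv_max, max_eq_right h]
            module
          rw [hsub, norm_smul, norm_neg,
            Real.norm_of_nonneg (sub_nonneg.2 (inv_le_one_of_one_le₀ h))]
          field_simp
      _ ≤ Kp p * ‖w‖ ^ p := sub_one_le_Kp_mul_rpow hp (norm_nonneg w)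

lemma norm_smul_sub_rpow_le (hp : 1 ≤ p) {l : ℝ} (hl : 0 ≤ l) (x z μ : B) :
    ‖l • (x - z)‖ ^ p ≤ l ^ p * 2 ^ (p - 1) * ‖x - μ‖ ^ p + l ^ p * 2 ^ (p - 1) * ‖μ - z‖ ^ p := by
  have hadd : (‖x - μ‖ + ‖μ - z‖) ^ p ≤ 2 ^ (p - 1) * (‖x - μ‖ ^ p + ‖μ - z‖ ^ p) :=
    mod_cast NNReal.rpow_add_le_mul_rpow_add_rpow ‖x - μ‖₊ ‖μ - z‖₊ hp
  calc ‖l • (x - z)‖ ^ p = l ^ p * ‖x - z‖ ^ p := by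
        rw [norm_smul_of_nonneg hl, mul_rpow hl (norm_nonneg _)]
    _ ≤ l ^ p * (‖x - μ‖ + ‖μ - z‖) ^ p := by
        gcongr
        exact norm_sub_le_norm_sub_add_norm_sub x μ z
    _ ≤ l ^ p * (2 ^ (p - 1) * (‖x - μ‖ ^ p + ‖μ - z‖ ^ p)) := by gcongr
    _ = _ := by ring

lemma sum_smul_truncB_smul_add_sub {ι : Type*} (s : Finset ι) (l : ι → ℝ) (x z : ι → B) (μ : B) :
    ∑ i ∈ s, l i • (truncB (l i • (x i - z i)) • (x i - z i) + z i) - (∑ i ∈ s, l i) • μ =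
      ∑ i ∈ s, clip (l i • (x i - z i)) - ∑ i ∈ s, l i • (μ - z i) := by
  rw [Finset.sum_smul, ← Finset.sum_sub_distrib, ← Finset.sum_sub_distrib]
  refine Finset.sum_congr rfl fun i _ => ?_
  unfold clip
  module

end Truncation

section ClippedStep

variable {B : Type*} [NormedAddCommGroup B] {Ω : Type*} {m mΩ : MeasurableSpace Ω}
  {P : Measure Ω} {X Z : Ω → B} {μ : B} {l : Ω → ℝ} {p v : ℝ}

lemma stronglyMeasurable_norm_const_sub_rpow (hZ : StronglyMeasurable[m] Z) (μ : B) (p : ℝ) :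
    StronglyMeasurable[m] fun ω => ‖μ - Z ω‖ ^ p :=
  ((stronglyMeasurable_const.sub hZ).norm.measurable.pow_const p).stronglyMeasurable

lemma memLp_ofReal_of_integrable_norm_rpow (hp : 0 < p) (hX : AEStronglyMeasurable X P)
    (hX_pow : Integrable (fun ω => ‖X ω‖ ^ p) P) : MemLp X (.ofReal p) P :=
  (integrable_norm_rpow_iff hX (ENNReal.ofReal_pos.2 hp).ne' ENNReal.ofReal_ne_top).1
    (by simpa only [ENNReal.toReal_ofReal hp.le] using hX_pow)

variable [NormedSpace ℝ B] [IsFiniteMeasure P]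

lemma integrable_clip {w : Ω → B} (hw : AEStronglyMeasurable w P) :
    Integrable (fun ω => clip (w ω)) P :=
  .of_bound (continuous_clip.comp_aestronglyMeasurable hw) 1
    (ae_of_all _ fun _ => norm_clip_le_one _)

variable [CompleteSpace B]

lemma norm_condExp_clip_smul_sub_sub_le (hm : m ≤ mΩ) (hp : 1 ≤ p) (hX : Integrable X P)
    (hX_pow : Integrable (fun ω => ‖X ω - μ‖ ^ p) P) (hX_mean : P[X | m] =ᵐ[P] fun _ => μ)
    (hX_moment : ∀ᵐ ω ∂P, (P[fun ω' => ‖X ω' - μ‖ ^ p | m]) ω ≤ v)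
    (hZ : StronglyMeasurable[m] Z) (hl : StronglyMeasurable[m] l) (hl_nonneg : ∀ ω, 0 ≤ l ω) :
    ∀ᵐ ω ∂P, ‖(P[fun ω' => clip (l ω' • (X ω' - Z ω')) | m]) ω - l ω • (μ - Z ω)‖ ≤
      Kp p * 2 ^ (p - 1) * (l ω ^ p * (v + ‖μ - Z ω‖ ^ p)) := by
  have hK := Kp_nonneg hp
  set α : Ω → ℝ := fun ω => Kp p * (l ω ^ p * 2 ^ (p - 1))
  have hα_nonneg (ω : Ω) : 0 ≤ α ω := by have := hl_nonneg ω; positivity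
  have hα_meas : StronglyMeasurable[m] α :=
    ((hl.measurable.pow_const p).stronglyMeasurable.mul_const _).const_mul _
  have hclip : Integrable (fun ω => clip (l ω • (X ω - Z ω))) P := integrable_clip
    ((hl.mono hm).aestronglyMeasurable.smul (hX.1.sub (hZ.mono hm).aestronglyMeasurable))
  have hpoint (ω : Ω) : ‖clip (l ω • (X ω - Z ω)) - l ω • (X ω - Z ω)‖ ≤
      α ω * ‖X ω - μ‖ ^ p + α ω * ‖μ - Z ω‖ ^ p := by
    refine (norm_clip_sub_le hp _).trans ?_
    linarith [mul_le_mul_of_nonneg_left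
      (norm_smul_sub_rpow_le hp (hl_nonneg ω) (X ω) (Z ω) μ) hK]
  filter_upwards [norm_condExp_sub_smul_condExp_sub_le hm hclip hX hX_pow hl hZ hα_meas
    (hα_meas.mul (stronglyMeasurable_norm_const_sub_rpow hZ μ p)) (ae_of_all _ hpoint),
    hX_mean, hX_moment] with ω hle hmean hmoment
  rw [hmean, Pi.mul_apply] at hle
  linarith [mul_le_mul_of_nonneg_left hmoment (hα_nonneg ω)]

lemma condExp_norm_clip_smul_sub_sub_condExp_sq_le (hm : m ≤ mΩ) (hp1 : 1 ≤ p) (hp2 : p ≤ 2)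
    (hX : AEStronglyMeasurable X P) (hX_pow : Integrable (fun ω => ‖X ω - μ‖ ^ p) P)
    (hX_moment : ∀ᵐ ω ∂P, (P[fun ω' => ‖X ω' - μ‖ ^ p | m]) ω ≤ v)
    (hZ : StronglyMeasurable[m] Z) (hl : StronglyMeasurable[m] l) (hl_nonneg : ∀ ω, 0 ≤ l ω) :
    ∀ᵐ ω ∂P, (P[fun ω' => ‖clip (l ω' • (X ω' - Z ω')) -
        (P[fun ω'' => clip (l ω'' • (X ω'' - Z ω'')) | m]) ω'‖ ^ 2 | m]) ω ≤
      2 ^ (p + 1) * (l ω ^ p * (v + ‖μ - Z ω‖ ^ p)) := by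
  set α : Ω → ℝ := fun ω => l ω ^ p * 2 ^ (p - 1)
  have hα_nonneg (ω : Ω) : 0 ≤ α ω := by have := hl_nonneg ω; positivity
  have hα_meas : StronglyMeasurable[m] α :=
    (hl.measurable.pow_const p).stronglyMeasurable.mul_const _
  have hclip : Integrable (fun ω => clip (l ω • (X ω - Z ω))) P := integrable_clip
    ((hl.mono hm).aestronglyMeasurable.smul (hX.sub (hZ.mono hm).aestronglyMeasurable))
  have hclip_le : ∀ᵐ ω ∂P, ‖clip (l ω • (X ω - Z ω))‖ ≤ 1 :=
    ae_of_all _ fun _ => norm_clip_le_one _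
  have hpoint (ω : Ω) : ‖clip (l ω • (X ω - Z ω))‖ ^ p ≤
      α ω * ‖X ω - μ‖ ^ p + α ω * ‖μ - Z ω‖ ^ p :=
    (rpow_le_rpow (norm_nonneg _) (norm_clip_le _) (by positivity)).trans
      (norm_smul_sub_rpow_le hp1 (hl_nonneg ω) (X ω) (Z ω) μ)
  filter_upwards [condExp_norm_sub_condExp_sq_le hm hp1 hp2 hclip.1 hclip_le,
    condExp_le_mul_condExp_add hm
      (integrable_norm_rpow_of_norm_le_one (by positivity) hclip.1 hclip_le) hX_pow hα_meas
      (hα_meas.mul (stronglyMeasurable_norm_const_sub_rpow hZ μ p)) (ae_of_all _ hpoint),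
    hX_moment] with ω hsq hpow hmoment
  have htwo : (2 : ℝ) ^ (p + 1) = 4 * 2 ^ (p - 1) := by
    rw [show p + 1 = 2 + (p - 1) by ring, rpow_add two_pos]
    norm_num
  rw [Pi.mul_apply] at hpow
  rw [htwo]
  linarith [mul_le_mul_of_nonneg_left hmoment (hα_nonneg ω)]

end ClippedStep

section ClippedSum

variable {B : Type*} [NormedAddCommGroup B] [NormedSpace ℝ B]
  {Ω : Type*} {mΩ : MeasurableSpace Ω} {P : Measure Ω} {ℱ : Filtration ℕ mΩ} {w : ℕ → Ω → B}

/-- The random walk whose increments are the clipped vectors `clip (w n ω)`. -/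
noncomputable def clippedSum (w : ℕ → Ω → B) (n : ℕ) (ω : Ω) : B :=
  ∑ i ∈ Finset.range n, clip (w i ω)

lemma clippedSum_add_one_sub (w : ℕ → Ω → B) (n : ℕ) :
    clippedSum w (n + 1) - clippedSum w n = fun ω => clip (w n ω) := by
  ext ω
  simp only [Pi.sub_apply, clippedSum, Finset.sum_range_succ, add_sub_cancel_left]

lemma martingalePart_clippedSum_add_one_sub (n : ℕ) (ω : Ω) :
    martingalePart (clippedSum w) ℱ P (n + 1) ω - martingalePart (clippedSum w) ℱ P n ω =
      clip (w n ω) - (P[fun ω' => clip (w n ω') | ℱ n]) ω := by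
  simp only [martingalePart, predictablePart_add_one, clippedSum_add_one_sub, Pi.sub_apply,
    Pi.add_apply]
  rw [← congrFun (clippedSum_add_one_sub w n) ω, Pi.sub_apply]
  abel

lemma martingale_martingalePart_clippedSum [CompleteSpace B] [IsFiniteMeasure P]
    (hw : ∀ n, StronglyMeasurable[ℱ (n + 1)] (w n)) :
    Martingale (martingalePart (clippedSum w) ℱ P) ℱ P := by
  have hw' (n : ℕ) : AEStronglyMeasurable (w n) P := ((hw n).mono (ℱ.le _)).aestronglyMeasurable
  refine martingale_martingalePart (fun n => ?_) fun n => ?_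
  · exact Finset.stronglyMeasurable_fun_sum _ fun i hi =>
      continuous_clip.comp_stronglyMeasurable ((hw i).mono (ℱ.mono (by grind)))
  · exact integrable_finsetSum _ fun i _ => integrable_clip (hw' i)

theorem IsTwoSmooth.supermartingale_cosh_martingalePart_clippedSum [CompleteSpace B]
    [IsFiniteMeasure P] {β : ℝ} (hB : IsTwoSmooth B β)
    (hw : ∀ n, StronglyMeasurable[ℱ (n + 1)] (w n)) {V : ℕ → Ω → ℝ} (hV : StronglyAdapted ℱ V)
    (hw_sq : ∀ n, ∀ᵐ ω ∂P, (P[fun ω' => ‖clip (w n ω') -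
      (P[fun ω'' => clip (w n ω'') | ℱ n]) ω'‖ ^ 2 | ℱ n]) ω ≤ V n ω) {ρ : ℝ} (hρ : 0 ≤ ρ) :
    Supermartingale (fun n ω => cosh (ρ * ‖martingalePart (clippedSum w) ℱ P n ω‖) *
      exp (-∑ i ∈ Finset.range n, β ^ 2 * bennettRatio (ρ * 2) * (ρ ^ 2 * V i ω))) ℱ P := by
  refine hB.supermartingale_cosh_mul_norm_mul_exp (martingale_martingalePart_clippedSum hw)
    (R := 0) (ae_of_all _ fun ω => ?_) (fun n => ?_) hV
    (by simpa only [martingalePart_clippedSum_add_one_sub] using hw_sq) hρ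
  · simp [clippedSum]
  · filter_upwards [ae_bdd_norm_condExp_of_ae_bdd_norm (m := ℱ n) (μ := P)
      (ae_of_all _ fun ω => norm_clip_le_one (w n ω))] with ω hω
    rw [martingalePart_clippedSum_add_one_sub]
    linarith [norm_sub_le_of_le (norm_clip_le_one (w n ω)) hω]

lemma norm_clippedSum_sub_sum_sub_martingalePart_le {a : ℕ → Ω → B} {γ : ℕ → Ω → ℝ}
    (h : ∀ n, ∀ᵐ ω ∂P, ‖(P[fun ω' => clip (w n ω') | ℱ n]) ω - a n ω‖ ≤ γ n ω) (n : ℕ) :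
    ∀ᵐ ω ∂P, ‖clippedSum w n ω - ∑ i ∈ Finset.range n, a i ω -
      martingalePart (clippedSum w) ℱ P n ω‖ ≤ ∑ i ∈ Finset.range n, γ i ω := by
  filter_upwards [ae_all_iff.2 h] with ω hω
  simp only [martingalePart, Pi.sub_apply]
  rw [sub_right_comm, sub_sub_cancel]
  simp only [predictablePart, clippedSum_add_one_sub, Finset.sum_apply, ← Finset.sum_sub_distrib]
  exact norm_sum_le_of_le _ fun i _ => hω i

end ClippedSum

lemma half_mul_exp_le_cosh_mul_exp_neg {a b c : ℝ} (h : a + c ≤ b) :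
    1 / 2 * exp a ≤ cosh b * exp (-c) := by
  calc 1 / 2 * exp a ≤ 1 / 2 * exp (b - c) := by gcongr; linarith
    _ = exp b / 2 * exp (-c) := by rw [sub_eq_add_neg, exp_add]; ring
    _ ≤ cosh b * exp (-c) := by
        rw [cosh_eq]
        gcongr
        linarith [exp_pos (-b)]

theorem stmt10_general
    {B : Type*} [NormedAddCommGroup B] [NormedSpace ℝ B] [CompleteSpace B]
    {Ω : Type*} {mΩ : MeasurableSpace Ω} {P : Measure Ω} [IsFiniteMeasure P]
    (β : ℝ) (hB : IsTwoSmooth B β)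
    (ℱ : Filtration ℕ mΩ) (X : ℕ → Ω → B) (μ : B) (p v : ℝ) (hp1 : 1 ≤ p) (hp2 : p ≤ 2)
    (hX_meas : ∀ n, StronglyMeasurable[ℱ (n + 1)] (X (n + 1)))
    (hX_pow : ∀ n, Integrable (fun ω => ‖X (n + 1) ω‖ ^ p) P)
    (hX_mean : ∀ n, P[X (n + 1) | ℱ n] =ᵐ[P] fun _ => μ)
    (hX_moment : ∀ n, ∀ᵐ ω ∂P, (P[fun ω' => ‖X (n + 1) ω' - μ‖ ^ p | ℱ n]) ω ≤ v)
    (Z : ℕ → Ω → B) (hZ : ∀ n, StronglyMeasurable[ℱ n] (Z (n + 1)))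
    (lam : ℕ → Ω → ℝ) (hlam : ∀ n, StronglyMeasurable[ℱ n] (lam (n + 1)))
    (hlam_nonneg : ∀ n ω, 0 ≤ lam (n + 1) ω)
    (ξ : ℕ → Ω → B)
    (hξ : ∀ n ω, ξ n ω = ∑ m ∈ Finset.range n,
      lam (m + 1) ω •
        (truncB (lam (m + 1) ω • (X (m + 1) ω - Z (m + 1) ω)) • (X (m + 1) ω - Z (m + 1) ω)
          + Z (m + 1) ω))
    (G : ℕ → Ω → ℝ)
    (hG : ∀ n ω, G n ω = ∑ m ∈ Finset.range n,
      lam (m + 1) ω ^ p * (v + ‖μ - Z (m + 1) ω‖ ^ p))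
    (ρ : ℝ) (hρ : 0 < ρ) :
    ∃ N : ℕ → Ω → ℝ,
      Supermartingale N ℱ P ∧ (∀ n ω, 0 ≤ N n ω) ∧ (∀ᵐ ω ∂P, N 0 ω = 1) ∧
        ∀ n : ℕ, ∀ᵐ ω ∂P,
          (1 / 2) * exp (ρ * ‖ξ n ω - (∑ m ∈ Finset.range n, lam (m + 1) ω) • μ‖ -
            (ρ ^ 2 * β ^ 2 * frakC p ρ + ρ * Kp p * 2 ^ (p - 1)) * G n ω) ≤ N n ω := by
  set w : ℕ → Ω → B := fun n ω => lam (n + 1) ω • (X (n + 1) ω - Z (n + 1) ω)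
  set g : ℕ → Ω → ℝ := fun n ω => lam (n + 1) ω ^ p * (v + ‖μ - Z (n + 1) ω‖ ^ p)
  have hX_memLp (n : ℕ) : MemLp (X (n + 1)) (.ofReal p) P :=
    memLp_ofReal_of_integrable_norm_rpow (one_pos.trans_le hp1)
      ((hX_meas n).mono (ℱ.le _)).aestronglyMeasurable (hX_pow n)
  have hX_int (n : ℕ) : Integrable (X (n + 1)) P := (hX_memLp n).integrable (by simpa)
  have hX_sub_pow (n : ℕ) : Integrable (fun ω => ‖X (n + 1) ω - μ‖ ^ p) P := by
    simpa [zero_le_one.trans hp1] using ((hX_memLp n).sub (memLp_const μ)).integrable_norm_rpow'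
  have hw_meas (n : ℕ) : StronglyMeasurable[ℱ (n + 1)] (w n) :=
    ((hlam n).mono (ℱ.mono n.le_succ)).smul ((hX_meas n).sub ((hZ n).mono (ℱ.mono n.le_succ)))
  have hg_meas : StronglyAdapted ℱ g := fun n =>
    ((hlam n).measurable.pow_const p).stronglyMeasurable.mul (stronglyMeasurable_const.add
      (stronglyMeasurable_norm_const_sub_rpow (hZ n) μ p))
  have hvariance (n : ℕ) := condExp_norm_clip_smul_sub_sub_condExp_sq_le (ℱ.le n) hp1 hp2
    (hX_int n).1 (hX_sub_pow n) (hX_moment n) (hZ n) (hlam n) (hlam_nonneg n)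
  have hbias (n : ℕ) := norm_condExp_clip_smul_sub_sub_le (ℱ.le n) hp1 (hX_int n) (hX_sub_pow n)
    (hX_mean n) (hX_moment n) (hZ n) (hlam n) (hlam_nonneg n)
  refine ⟨_, hB.supermartingale_cosh_martingalePart_clippedSum hw_meas
    (fun n => (hg_meas n).const_mul (2 ^ (p + 1))) hvariance hρ.le,
    fun n ω => mul_nonneg (cosh_pos _).le (exp_pos _).le,
    ae_of_all _ fun ω => by simp [clippedSum], fun n => ?_⟩
  filter_upwards [norm_clippedSum_sub_sum_sub_martingalePart_le hbias n] with ω hω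
  have hξ_eq : ξ n ω - (∑ m ∈ Finset.range n, lam (m + 1) ω) • μ =
      clippedSum w n ω - ∑ i ∈ Finset.range n, lam (i + 1) ω • (μ - Z (i + 1) ω) := by
    rw [hξ, sum_smul_truncB_smul_add_sub, clippedSum]
  have hG_eq : ∑ i ∈ Finset.range n,
      β ^ 2 * bennettRatio (ρ * 2) * (ρ ^ 2 * (2 ^ (p + 1) * g i ω)) =
      ρ ^ 2 * β ^ 2 * frakC p ρ * G n ω := by
    rw [hG, frakC_eq, Finset.mul_sum, mul_comm 2 ρ]
    exact Finset.sum_congr rfl fun i _ => by ring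
  rw [← hξ_eq, ← Finset.mul_sum, ← hG] at hω
  refine half_mul_exp_le_cosh_mul_exp_neg ?_
  rw [hG_eq]
  linarith [mul_le_mul_of_nonneg_left ((norm_le_norm_add_norm_sub' _ _).trans
    (add_le_add_right hω _)) hρ.le]

end

/-- **Exponential supermartingale bound for the truncated-mean process.** For every
`ρ > 0` there is a nonnegative supermartingale `(Nₙ)` with `N₀ = 1` such that for every
`n ≥ 0`, almost surely
`(1/2) exp(ρ‖ξ̂ₙ - (∑_{m≤n} λₘ)·μ‖ - (ρ²β²𝔠_p(ρ) + ρK_p2^{p-1})Gₙ) ≤ Nₙ`. -/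
theorem stmt10
    {B : Type*} [NormedAddCommGroup B] [NormedSpace ℝ B] [CompleteSpace B]
    [TopologicalSpace.SeparableSpace B]
    {Ω : Type*} {mΩ : MeasurableSpace Ω} {P : Measure Ω} [IsProbabilityMeasure P]
    (β : ℝ) (hβ : 1 ≤ β)
    (hsmooth : ∀ x y : B, ‖x + y‖ ^ 2 + ‖x - y‖ ^ 2 ≤ 2 * ‖x‖ ^ 2 + 2 * β ^ 2 * ‖y‖ ^ 2)
    (ℱ : Filtration ℕ mΩ) (X : ℕ → Ω → B) (μ : B) (p v : ℝ)
    (hp1 : 1 < p) (hp2 : p ≤ 2) (hv : 0 < v)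
    (hadapted : ∀ n : ℕ, 1 ≤ n → StronglyMeasurable[ℱ n] (X n))
    (hint : ∀ n : ℕ, 1 ≤ n → Integrable (X n) P)
    (hmom : ∀ n : ℕ, 1 ≤ n → Integrable (fun ω => ‖X n ω‖ ^ p) P)
    (hcondmean : ∀ n : ℕ, P[X (n + 1) | ℱ n] =ᵐ[P] fun _ => μ)
    (hcondmom : ∀ n : ℕ, ∀ᵐ ω ∂P, (P[fun ω' => ‖X (n + 1) ω' - μ‖ ^ p | ℱ n]) ω ≤ v)
    (Z : ℕ → Ω → B) (hZpred : ∀ n : ℕ, StronglyMeasurable[ℱ n] (Z (n + 1)))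
    (lam : ℕ → Ω → ℝ) (hlampred : ∀ n : ℕ, StronglyMeasurable[ℱ n] (lam (n + 1)))
    (hlampos : ∀ n ω, 0 < lam n ω)
    (S : ℕ → Ω → B)
    (hS : ∀ n ω, S n ω = ∑ m ∈ Finset.range n,
      lam (m + 1) ω •
        (truncB (lam (m + 1) ω • (X (m + 1) ω - Z (m + 1) ω)) • (X (m + 1) ω - Z (m + 1) ω)
          + Z (m + 1) ω
          - ((P[fun ω' => truncB (lam (m + 1) ω' • (X (m + 1) ω' - Z (m + 1) ω')) •
                (X (m + 1) ω' - Z (m + 1) ω') | ℱ m]) ω + Z (m + 1) ω)))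
    (ξ : ℕ → Ω → B)
    (hξ : ∀ n ω, ξ n ω = ∑ m ∈ Finset.range n,
      lam (m + 1) ω •
        (truncB (lam (m + 1) ω • (X (m + 1) ω - Z (m + 1) ω)) • (X (m + 1) ω - Z (m + 1) ω)
          + Z (m + 1) ω))
    (G : ℕ → Ω → ℝ)
    (hG : ∀ n ω, G n ω = ∑ m ∈ Finset.range n,
      lam (m + 1) ω ^ p * (v + ‖μ - Z (m + 1) ω‖ ^ p))
    (ρ : ℝ) (hρ : 0 < ρ) :
    ∃ N : ℕ → Ω → ℝ,
      Supermartingale N ℱ P ∧ (∀ n ω, 0 ≤ N n ω) ∧ (∀ᵐ ω ∂P, N 0 ω = 1) ∧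
        ∀ n : ℕ, ∀ᵐ ω ∂P,
          (1 / 2) * Real.exp (ρ * ‖ξ n ω - (∑ m ∈ Finset.range n, lam (m + 1) ω) • μ‖ -
            (ρ ^ 2 * β ^ 2 * frakC p ρ + ρ * Kp p * 2 ^ (p - 1)) * G n ω) ≤ N n ω := by
  exact stmt10_general β hsmooth ℱ X μ p v hp1.le hp2 (fun n => hadapted _ n.succ_pos)
    (fun n => hmom _ n.succ_pos) hcondmean hcondmom Z hZpred lam hlampred
    (fun n ω => (hlampos _ ω).le) ξ hξ G hG ρ hρ
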